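/- arXiv:2006.11608 — 6 statements merged into one kernel-verified Lean document; each statement's English description precedes it below -/
import Mathlib

section
/- For all V1, V2 ∈ ℝ^S and all λ ∈ [0,1), the approximate robust TD(λ) operator satisfies ‖T̃^{(λ)}(V1) − T̃^{(λ)}(V2)‖_d ≤ c(α,β,ρ,λ)·‖V1 − V2‖_d, where c(α,β,ρ,λ) = (β(2−λ) + ρα)/(1−βλ). -/
/-!
The operator depends on `V` only through `x = r + α σ_Û(V)` and `V` itself, and linearly so: it is
`(1 - λ) ∑ λ^m (∑_{t ≤ m} M^t x + M^{m+1} V)` with `M = α P`.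

Jensen's inequality and stationarity of `d` make `P_e` nonexpansive for the `d`-weighted norm
(`dnorm_le_of_abs_le`), so a matrix whose entries are at most `β P_e` in absolute value contracts by
`β`; this covers `M`. The same domination holds for every `α u` with `u ∈ U_s`, since
`α u = α (P + u) - α P` is a difference of two numbers in `[0, β P_e]`. Superadditivity of `σ_Û`
reduces `σ_Û(V₁) - σ_Û(V₂)` to the values of `σ_Û` at `±(V₁ - V₂)`, and there `σ_Û` is within
`ρ ‖V₁ - V₂‖` of `σ_U`; hence `‖α (σ_Û(V₁) - σ_Û(V₂))‖ ≤ (β + ρ α) ‖V₁ - V₂‖`.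

Summing the geometric series (`hasSum_bound`), a pair `(x, y)` is sent to a vector of norm at most
`(‖x‖ + (1 - λ) β ‖y‖) / (1 - β λ)`, and `(β + ρ α) + (1 - λ) β = β (2 - λ) + ρ α`.
-/

open Matrix Finset

/-- d-weighted Euclidean norm on ℝ^S. -/
noncomputable def dnorm {S : Type*} [Fintype S] (d V : S → ℝ) : ℝ :=
  Real.sqrt (∑ s, d s * (V s) ^ 2)

/-- σ_U(V)(s) = inf_{u ∈ U_s} Σ_{s'} u(s') V(s'). -/
noncomputable def sigmaSet {S : Type*} [Fintype S] (U : S → Set (S → ℝ)) (V : S → ℝ) :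
    S → ℝ :=
  fun s => sInf ((fun u => ∑ s', u s' * V s') '' U s)

/-- The (approximate) robust TD(λ) operator built from the uncertainty sets `Uh`. -/
noncomputable def approxOp {S : Type*} [Fintype S] [DecidableEq S] (r : S → ℝ) (P : Matrix S S ℝ)
    (α lam : ℝ) (Uh : S → Set (S → ℝ)) (V : S → ℝ) : S → ℝ :=
  (1 - lam) • ∑' m : ℕ, lam ^ m •
    ((∑ t ∈ Finset.range (m + 1), ((α • P) ^ t).mulVec r)
      + α • (∑ t ∈ Finset.range (m + 1), ((α • P) ^ t).mulVec (sigmaSet Uh V))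
      + ((α • P) ^ (m + 1)).mulVec V)

/-! ### The weighted norm -/

/-- `dnorm d` is the Euclidean norm after scaling coordinate `s` by `√(d s)`. -/
lemma dnorm_eq_norm {S : Type*} [Fintype S] (d : S → ℝ) (hd : ∀ s, 0 < d s) (V : S → ℝ) :
    dnorm d V = ‖WithLp.toLp 2 (fun s => √(d s) * V s)‖ := by
  rw [EuclideanSpace.norm_eq, dnorm]
  congr 1
  refine Finset.sum_congr rfl fun s _ => ?_
  simp [mul_pow, Real.sq_sqrt (hd s).le]

lemma dnorm_nonneg {S : Type*} [Fintype S] (d V : S → ℝ) : 0 ≤ dnorm d V := Real.sqrt_nonneg _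

lemma dnorm_add_le {S : Type*} [Fintype S] (d : S → ℝ) (hd : ∀ s, 0 < d s) (V W : S → ℝ) :
    dnorm d (V + W) ≤ dnorm d V + dnorm d W := by
  simp only [dnorm_eq_norm d hd]
  refine le_of_eq_of_le ?_ (norm_add_le _ _)
  congr 1
  ext s
  simp [mul_add]

lemma dnorm_smul {S : Type*} [Fintype S] (d : S → ℝ) (hd : ∀ s, 0 < d s) (c : ℝ) (V : S → ℝ) :
    dnorm d (c • V) = |c| * dnorm d V := by
  simp only [dnorm_eq_norm d hd]
  rw [← Real.norm_eq_abs, ← norm_smul]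
  congr 1
  ext s
  simp [mul_left_comm]

lemma dnorm_zero {S : Type*} [Fintype S] (d : S → ℝ) : dnorm d 0 = 0 := by
  simp [dnorm]

lemma dnorm_neg {S : Type*} [Fintype S] (d V : S → ℝ) : dnorm d (-V) = dnorm d V := by
  simp [dnorm]

lemma dnorm_sum_le {S ι : Type*} [Fintype S] (d : S → ℝ) (hd : ∀ s, 0 < d s) (T : Finset ι)
    (f : ι → S → ℝ) : dnorm d (∑ i ∈ T, f i) ≤ ∑ i ∈ T, dnorm d (f i) :=
  Finset.le_sum_of_subadditive _ (dnorm_zero d).le (dnorm_add_le d hd) _ _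

lemma dnorm_mono {S : Type*} [Fintype S] (d : S → ℝ) (hd : ∀ s, 0 < d s) {V W : S → ℝ}
    (h : ∀ s, |V s| ≤ W s) : dnorm d V ≤ dnorm d W := by
  refine Real.sqrt_le_sqrt (Finset.sum_le_sum fun s _ => ?_)
  exact mul_le_mul_of_nonneg_left (sq_le_sq.2 ((h s).trans (le_abs_self _))) (hd s).le

lemma abs_apply_le_dnorm {S : Type*} [Fintype S] (d : S → ℝ) (hd : ∀ s, 0 < d s) (V : S → ℝ)
    (s : S) : |V s| ≤ (√(d s))⁻¹ * dnorm d V := by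
  have hs : 0 < √(d s) := Real.sqrt_pos.2 (hd s)
  rw [← div_eq_inv_mul, le_div_iff₀ hs, dnorm_eq_norm d hd]
  have := PiLp.norm_apply_le (WithLp.toLp 2 (fun s => √(d s) * V s)) s
  simpa [abs_mul, abs_of_pos hs, mul_comm] using this

/-- Jensen's inequality and stationarity: averaging by `Pe` does not increase the norm. -/
lemma dnorm_stationary_le {S : Type*} [Fintype S] (d : S → ℝ) (hd : ∀ s, 0 < d s)
    (Pe : Matrix S S ℝ) (hPe0 : ∀ s s', 0 ≤ Pe s s') (hPe1 : ∀ s, ∑ s', Pe s s' = 1)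
    (hstat2 : ∀ s', ∑ s, d s * Pe s s' = d s') (V : S → ℝ) :
    dnorm d (fun s => ∑ s', Pe s s' * |V s'|) ≤ dnorm d V := by
  refine Real.sqrt_le_sqrt ?_
  calc ∑ s, d s * (∑ s', Pe s s' * |V s'|) ^ 2
      ≤ ∑ s, d s * ∑ s', Pe s s' * |V s'| ^ 2 := by
        refine Finset.sum_le_sum fun s _ => mul_le_mul_of_nonneg_left ?_ (hd s).le
        exact Real.pow_arith_mean_le_arith_mean_pow_of_even _ _ _ (fun i _ => hPe0 s i)
          (hPe1 s) even_two
    _ = ∑ s', (∑ s, d s * Pe s s') * V s' ^ 2 := by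
        simp only [Finset.mul_sum, Finset.sum_mul, sq_abs, mul_assoc]
        exact Finset.sum_comm
    _ = ∑ s', d s' * V s' ^ 2 := by simp only [hstat2]

/-- The additive constant `c` passes through unchanged because `d` has total mass one. -/
lemma dnorm_le_of_abs_le {S : Type*} [Fintype S] (d : S → ℝ) (hd : ∀ s, 0 < d s)
    (Pe : Matrix S S ℝ) (hPe0 : ∀ s s', 0 ≤ Pe s s') (hPe1 : ∀ s, ∑ s', Pe s s' = 1)
    (hstat1 : ∑ s, d s = 1) (hstat2 : ∀ s', ∑ s, d s * Pe s s' = d s')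
    {β c : ℝ} (hβ : 0 ≤ β) (hc : 0 ≤ c) {V W : S → ℝ}
    (h : ∀ s, |W s| ≤ β * (∑ s', Pe s s' * |V s'|) + c) :
    dnorm d W ≤ β * dnorm d V + c := by
  have hcst : dnorm d (fun _ => c) = c := by
    simp [dnorm, ← Finset.sum_mul, hstat1, Real.sqrt_sq hc]
  calc dnorm d W ≤ dnorm d (β • (fun s => ∑ s', Pe s s' * |V s'|) + fun _ => c) :=
        dnorm_mono d hd h
    _ ≤ dnorm d (β • (fun s => ∑ s', Pe s s' * |V s'|)) + dnorm d (fun _ => c) :=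
        dnorm_add_le d hd _ _
    _ ≤ β * dnorm d V + c := by
        rw [dnorm_smul d hd, abs_of_nonneg hβ, hcst]
        gcongr
        exact dnorm_stationary_le d hd Pe hPe0 hPe1 hstat2 V

/-! ### Geometric averages of matrix powers -/

/-- The vector to which `lam ^ m` is attached in the TD(`lam`) series, as a linear function of the
source term `x` and the terminal value `y`. -/
noncomputable def tdTerm {S : Type*} [Fintype S] [DecidableEq S] (M : Matrix S S ℝ)
    (x y : S → ℝ) (m : ℕ) : S → ℝ :=
  (∑ t ∈ Finset.range (m + 1), (M ^ t).mulVec x) + (M ^ (m + 1)).mulVec y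

lemma tdTerm_sub {S : Type*} [Fintype S] [DecidableEq S] (M : Matrix S S ℝ)
    (x₁ x₂ y₁ y₂ : S → ℝ) (m : ℕ) :
    tdTerm M (x₁ - x₂) (y₁ - y₂) m = tdTerm M x₁ y₁ m - tdTerm M x₂ y₂ m := by
  simp only [tdTerm, Matrix.mulVec_sub, Finset.sum_sub_distrib]
  abel

lemma approxOp_eq {S : Type*} [Fintype S] [DecidableEq S] (r : S → ℝ) (P : Matrix S S ℝ)
    (α lam : ℝ) (Uh : S → Set (S → ℝ)) (V : S → ℝ) :
    approxOp r P α lam Uh V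
      = (1 - lam) • ∑' m : ℕ, lam ^ m • tdTerm (α • P) (r + α • sigmaSet Uh V) V m := by
  simp only [approxOp, tdTerm, Matrix.mulVec_add, Finset.sum_add_distrib, Matrix.mulVec_smul,
    Finset.smul_sum]

lemma dnorm_pow_le {S : Type*} [Fintype S] [DecidableEq S] (d : S → ℝ) (M : Matrix S S ℝ) {β : ℝ}
    (hβ : 0 ≤ β) (hM : ∀ v, dnorm d (M.mulVec v) ≤ β * dnorm d v) (t : ℕ) (v : S → ℝ) :
    dnorm d ((M ^ t).mulVec v) ≤ β ^ t * dnorm d v := by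
  induction t with
  | zero => simp
  | succ k ih =>
    rw [pow_succ', ← Matrix.mulVec_mulVec, pow_succ', mul_assoc]
    exact (hM _).trans (mul_le_mul_of_nonneg_left ih hβ)

lemma dnorm_tdTerm_le {S : Type*} [Fintype S] [DecidableEq S] (d : S → ℝ) (hd : ∀ s, 0 < d s)
    (M : Matrix S S ℝ) {β : ℝ} (hβ : 0 ≤ β)
    (hM : ∀ v, dnorm d (M.mulVec v) ≤ β * dnorm d v) (x y : S → ℝ) (m : ℕ) :
    dnorm d (tdTerm M x y m)
      ≤ (∑ t ∈ Finset.range (m + 1), β ^ t) * dnorm d x + β ^ (m + 1) * dnorm d y := by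
  refine (dnorm_add_le d hd _ _).trans (add_le_add ?_ (dnorm_pow_le d M hβ hM _ _))
  rw [Finset.sum_mul]
  exact (dnorm_sum_le d hd _ _).trans (Finset.sum_le_sum fun t _ => dnorm_pow_le d M hβ hM _ _)

lemma hasSum_bound {β lam : ℝ} (hβ : β ∈ Set.Ioo (0 : ℝ) 1) (hlam : lam ∈ Set.Ico (0 : ℝ) 1)
    (a b : ℝ) :
    HasSum (fun m : ℕ => lam ^ m * ((∑ t ∈ Finset.range (m + 1), β ^ t) * a + β ^ (m + 1) * b))
      ((1 - lam)⁻¹ * ((a + (1 - lam) * β * b) / (1 - β * lam))) := by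
  obtain ⟨hβ0, hβ1⟩ := hβ
  obtain ⟨hl0, hl1⟩ := hlam
  have hlt : β * lam < 1 := by nlinarith
  have h1 := (hasSum_geometric_of_lt_one hl0 hl1).mul_right (a / (1 - β))
  have h2 := (hasSum_geometric_of_lt_one (mul_nonneg hβ0.le hl0) hlt).mul_right
    (β * (b - a / (1 - β)))
  have e1 : 1 - β ≠ 0 := by linarith
  have e2 : 1 - lam ≠ 0 := by linarith
  have e3 : 1 - β * lam ≠ 0 := by linarith
  have e4 : 1 - lam * β ≠ 0 := by linarith
  have hsum : (1 - lam)⁻¹ * ((a + (1 - lam) * β * b) / (1 - β * lam))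
      = (1 - lam)⁻¹ * (a / (1 - β)) + (1 - β * lam)⁻¹ * (β * (b - a / (1 - β))) := by
    field_simp
    ring
  rw [hsum]
  refine (congrArg (HasSum · _) (funext fun m => ?_)).mpr (h1.add h2)
  have hg : ∑ t ∈ Finset.range (m + 1), β ^ t = (1 - β ^ (m + 1)) / (1 - β) := by
    rw [eq_div_iff e1, geom_sum_mul_neg]
  rw [hg, mul_pow, pow_succ]
  field_simp
  ring

lemma summable_tdTerm {S : Type*} [Fintype S] [DecidableEq S] (d : S → ℝ) (hd : ∀ s, 0 < d s)
    (M : Matrix S S ℝ) {β lam : ℝ} (hβ : β ∈ Set.Ioo (0 : ℝ) 1) (hlam : lam ∈ Set.Ico (0 : ℝ) 1)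
    (hM : ∀ v, dnorm d (M.mulVec v) ≤ β * dnorm d v) (x y : S → ℝ) :
    Summable (fun m : ℕ => lam ^ m • tdTerm M x y m) := by
  refine Pi.summable.2 fun s => ?_
  refine Summable.of_norm_bounded
    ((hasSum_bound hβ hlam (dnorm d x) (dnorm d y)).summable.mul_left (√(d s))⁻¹) fun m => ?_
  refine (abs_apply_le_dnorm d hd _ s).trans ?_
  rw [dnorm_smul d hd, abs_of_nonneg (pow_nonneg hlam.1 m)]
  have := pow_nonneg hlam.1 m
  gcongr
  exact dnorm_tdTerm_le d hd M hβ.1.le hM x y m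

lemma dnorm_tsum_tdTerm_le {S : Type*} [Fintype S] [DecidableEq S] (d : S → ℝ)
    (hd : ∀ s, 0 < d s)
    (M : Matrix S S ℝ) {β lam : ℝ} (hβ : β ∈ Set.Ioo (0 : ℝ) 1) (hlam : lam ∈ Set.Ico (0 : ℝ) 1)
    (hM : ∀ v, dnorm d (M.mulVec v) ≤ β * dnorm d v) (x y : S → ℝ) :
    dnorm d ((1 - lam) • ∑' m : ℕ, lam ^ m • tdTerm M x y m)
      ≤ (dnorm d x + (1 - lam) * β * dnorm d y) / (1 - β * lam) := by
  have hl : 0 < 1 - lam := by linarith [hlam.2]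
  have hb := hasSum_bound hβ hlam (dnorm d x) (dnorm d y)
  rw [dnorm_smul d hd, abs_of_pos hl, ← le_inv_mul_iff₀ hl]
  have hcont : Continuous (dnorm d) := by
    unfold dnorm
    fun_prop
  refine le_of_tendsto_of_tendsto'
    ((hcont.tendsto _).comp (summable_tdTerm d hd M hβ hlam hM x y).hasSum) hb fun T => ?_
  refine (dnorm_sum_le d hd _ _).trans (Finset.sum_le_sum fun m _ => ?_)
  rw [dnorm_smul d hd, abs_of_nonneg (pow_nonneg hlam.1 m)]
  exact mul_le_mul_of_nonneg_left (dnorm_tdTerm_le d hd M hβ.1.le hM x y m)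
    (pow_nonneg hlam.1 m)

/-! ### The support function -/

/-- Compactness enters here: without a lower bound `sInf` would take a junk value. -/
lemma sigmaSet_superadd {S : Type*} [Fintype S] (U : S → Set (S → ℝ))
    (hU : ∀ s, (U s).Nonempty) (hUc : ∀ s, IsCompact (U s)) (V W : S → ℝ) (s : S) :
    sigmaSet U V s + sigmaSet U W s ≤ sigmaSet U (V + W) s := by
  have hbdd : ∀ V : S → ℝ, BddBelow ((fun u => ∑ s', u s' * V s') '' U s) := fun V =>
    ((hUc s).image (by fun_prop)).bddBelow
  refine le_csInf ((hU s).image _) ?_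
  rintro _ ⟨u, hu, rfl⟩
  have h1 := csInf_le (hbdd V) ⟨u, hu, rfl⟩
  have h2 := csInf_le (hbdd W) ⟨u, hu, rfl⟩
  simp only [Pi.add_apply, mul_add, Finset.sum_add_distrib]
  exact add_le_add h1 h2

/-- A lower bound for `α σ_U` from `|α u| ≤ β Pe`, which is the difference of the two
domination hypotheses. -/
lemma neg_le_mul_sigmaSet {S : Type*} [Fintype S] (P Pe : Matrix S S ℝ)
    (hP0 : ∀ s s', 0 ≤ P s s') {α β : ℝ} (hα : 0 < α)
    (U : S → Set (S → ℝ)) (hU : ∀ s, (U s).Nonempty)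
    (hexp1 : ∀ s s', ∀ u ∈ U s, 0 ≤ P s s' + u s')
    (hexp2 : ∀ s s', ∀ u ∈ U s, α * (P s s' + u s') ≤ β * Pe s s')
    (hexp3 : ∀ s s', α * P s s' ≤ β * Pe s s') (V : S → ℝ) (s : S) :
    -(β * ∑ s', Pe s s' * |V s'|) ≤ α * sigmaSet U V s := by
  rw [← div_le_iff₀' hα]
  refine le_csInf ((hU s).image _) ?_
  rintro _ ⟨u, hu, rfl⟩
  rw [div_le_iff₀' hα, Finset.mul_sum, Finset.mul_sum, ← Finset.sum_neg_distrib]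
  refine Finset.sum_le_sum fun s' _ => ?_
  have habs : |α * u s'| ≤ β * Pe s s' := by
    have h1 := mul_nonneg hα.le (hexp1 s s' u hu)
    have h2 := mul_nonneg hα.le (hP0 s s')
    have h3 := hexp2 s s' u hu
    have h4 := hexp3 s s'
    rw [mul_add] at h1 h3
    exact abs_le.2 ⟨by linarith, by linarith⟩
  calc -(β * (Pe s s' * |V s'|)) = -((β * Pe s s') * |V s'|) := by ring
    _ ≤ -(|α * u s'| * |V s'|) :=
        neg_le_neg (mul_le_mul_of_nonneg_right habs (abs_nonneg _))
    _ = -|α * u s' * V s'| := by rw [abs_mul (α * u s')]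
    _ ≤ α * u s' * V s' := neg_abs_le _
    _ = α * (u s' * V s') := by ring

theorem approxOp_contraction {S : Type*} [Fintype S] [DecidableEq S] [Nonempty S]
    (d : S → ℝ) (hd : ∀ s, 0 < d s)
    (r : S → ℝ) (P : Matrix S S ℝ)
    (hP0 : ∀ s s', 0 ≤ P s s') (hP1 : ∀ s, ∑ s', P s s' = 1)
    (α : ℝ) (hα : α ∈ Set.Ioo (0 : ℝ) 1)
    (U : S → Set (S → ℝ)) (hU : ∀ s, (U s).Nonempty) (hUc : ∀ s, IsCompact (U s))
    (Pe : Matrix S S ℝ) (hPe0 : ∀ s s', 0 ≤ Pe s s') (hPe1 : ∀ s, ∑ s', Pe s s' = 1)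
    (β : ℝ) (hβ : β ∈ Set.Ioo (0 : ℝ) 1)
    (hexp1 : ∀ s s', ∀ u ∈ U s, 0 ≤ P s s' + u s')
    (hexp2 : ∀ s s', ∀ u ∈ U s, α * (P s s' + u s') ≤ β * Pe s s')
    (hexp3 : ∀ s s', α * P s s' ≤ β * Pe s s')
    (hstat1 : ∑ s, d s = 1) (hstat2 : ∀ s', ∑ s, d s * Pe s s' = d s')
    (Uh : S → Set (S → ℝ)) (hUh : ∀ s, (Uh s).Nonempty) (hUhc : ∀ s, IsCompact (Uh s))
    (ρ : ℝ) (hρ0 : 0 ≤ ρ)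
    (hρ : ∀ (V : S → ℝ) (s : S), |sigmaSet Uh V s - sigmaSet U V s| ≤ ρ * dnorm d V)
    (lam : ℝ) (hlam : lam ∈ Set.Ico (0 : ℝ) 1)
    (V1 V2 : S → ℝ) :
    dnorm d (approxOp r P α lam Uh V1 - approxOp r P α lam Uh V2)
      ≤ (β * (2 - lam) + ρ * α) / (1 - β * lam) * dnorm d (V1 - V2) := by
  obtain ⟨hα0, hα1⟩ := hα
  have hM : ∀ v, dnorm d ((α • P).mulVec v) ≤ β * dnorm d v := by
    intro v
    have := dnorm_le_of_abs_le d hd Pe hPe0 hPe1 hstat1 hstat2 hβ.1.le le_rfl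
      (V := v) (W := (α • P).mulVec v) (fun s => ?_)
    · simpa using this
    · rw [add_zero, Finset.mul_sum]
      refine (Finset.abs_sum_le_sum_abs _ _).trans (Finset.sum_le_sum fun s' _ => ?_)
      change |α * P s s' * v s'| ≤ β * (Pe s s' * |v s'|)
      rw [abs_mul,
        abs_of_nonneg (mul_nonneg hα0.le (hP0 s s')), ← mul_assoc]
      exact mul_le_mul_of_nonneg_right (hexp3 s s') (abs_nonneg _)
  have hlow : ∀ (V W : S → ℝ) (s : S),
      -(β * (∑ s', Pe s s' * |(V - W) s'|) + ρ * α * dnorm d (V - W))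
        ≤ α * (sigmaSet Uh V s - sigmaSet Uh W s) := by
    intro V W s
    have h1 := sigmaSet_superadd Uh hUh hUhc W (V - W) s
    rw [add_sub_cancel] at h1
    have h2 := (abs_le.1 (hρ (V - W) s)).1
    have h3 := neg_le_mul_sigmaSet P Pe hP0 hα0 U hU hexp1 hexp2 hexp3 (V - W) s
    have h4 : α * (sigmaSet U (V - W) s - ρ * dnorm d (V - W))
        ≤ α * (sigmaSet Uh V s - sigmaSet Uh W s) :=
      mul_le_mul_of_nonneg_left (by linarith) hα0.le
    linarith
  have hσ : dnorm d (α • (sigmaSet Uh V1 - sigmaSet Uh V2))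
      ≤ β * dnorm d (V1 - V2) + ρ * α * dnorm d (V1 - V2) := by
    refine dnorm_le_of_abs_le d hd Pe hPe0 hPe1 hstat1 hstat2 hβ.1.le
      (mul_nonneg (mul_nonneg hρ0 hα0.le) (dnorm_nonneg _ _)) fun s => ?_
    have h1 := hlow V1 V2 s
    have h2 := hlow V2 V1 s
    rw [← neg_sub V1 V2, dnorm_neg] at h2
    simp only [Pi.neg_apply, abs_neg] at h2
    simp only [Pi.smul_apply, Pi.sub_apply, smul_eq_mul] at h1 h2 ⊢
    exact abs_le.2 ⟨h1, by linarith⟩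
  have hden : 0 < 1 - β * lam := by nlinarith [hβ.1, hβ.2, hlam.1, hlam.2]
  have hdiff : approxOp r P α lam Uh V1 - approxOp r P α lam Uh V2
      = (1 - lam) • ∑' m : ℕ, lam ^ m •
          tdTerm (α • P) (α • (sigmaSet Uh V1 - sigmaSet Uh V2)) (V1 - V2) m := by
    rw [approxOp_eq, approxOp_eq, ← smul_sub,
      ← (summable_tdTerm d hd _ hβ hlam hM _ _).tsum_sub (summable_tdTerm d hd _ hβ hlam hM _ _)]
    congr 2
    ext1 m
    rw [← smul_sub, ← tdTerm_sub, add_sub_add_left_eq_sub, ← smul_sub]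
  rw [hdiff]
  refine (dnorm_tsum_tdTerm_le d hd _ hβ hlam hM _ _).trans ?_
  rw [div_mul_eq_mul_div]
  gcongr
  linarith
end

section
/- Under the exploration assumption, for all V1, V2 ∈ ℝ^S and λ ∈ [0,1): ‖Π T^{(λ)}(V1) − Π T^{(λ)}(V2)‖_d ≤ (β(1−λ)/(1−βλ))·‖V1 − V2‖_d; hence Π T^{(λ)} is a contraction in the d-weighted Euclidean norm for any β ∈ (0,1) and λ ∈ [0,1). -/
/-!
With respect to the weighted norm `dnorm d`, three facts combine.

* The Bellman operator is a `β`-contraction (`dnorm_bellman_sub_le`). Each `r + α (P V + u · V)` is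
  affine in `V` with nonnegative coefficients dominated by `β Pe`, and an infimum of such functions
  satisfies `|T V - T W| ≤ β Pe |V - W|` pointwise. By Jensen's inequality in each row and the
  stationarity of `d`, the stochastic matrix `Pe` is nonexpansive for `dnorm d`.
* Hence the `m`-th term of the series for `T^(λ) V₁ - T^(λ) V₂` has norm at most
  `λ ^ m β ^ (m + 1) ‖V₁ - V₂‖`, and a geometric series gives the factor
  `β (1 - λ) / (1 - β λ)` (`dnorm_tdOp_sub_le`). The two series converge because the orbits of
  a contraction are bounded.
* The `d`-orthogonal projection is nonexpansive (`dnorm_projMat_le`).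
-/

open Matrix Finset

/-- The robust Bellman operator T(V) = r + α (P V + σ_U(V)). -/
noncomputable def bellman {S : Type*} [Fintype S] (r : S → ℝ) (P : Matrix S S ℝ)
    (α : ℝ) (U : S → Set (S → ℝ)) (V : S → ℝ) : S → ℝ :=
  fun s => r s + α * (P.mulVec V s + sigmaSet U V s)

/-- The robust TD(λ) operator T^{(λ)}(V) = (1−λ) Σ_m λ^m T^{m+1}(V). -/
noncomputable def tdOp {S : Type*} [Fintype S] (r : S → ℝ) (P : Matrix S S ℝ)
    (α lam : ℝ) (U : S → Set (S → ℝ)) (V : S → ℝ) : S → ℝ :=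
  (1 - lam) • ∑' m : ℕ, lam ^ m • (bellman r P α U)^[m + 1] V

/-- The d-weighted orthogonal projection Π = Φ(ΦᵀDΦ)⁻¹ΦᵀD onto the column space of Φ. -/
noncomputable def projMat {S : Type*} [Fintype S] [DecidableEq S] {L : ℕ}
    (Φ : Matrix S (Fin L) ℝ) (d : S → ℝ) : Matrix S S ℝ :=
  Φ * (Φᵀ * Matrix.diagonal d * Φ)⁻¹ * Φᵀ * Matrix.diagonal d

/-- The linear map `V ↦ √d · V` into Euclidean space, which turns `dnorm d` into the
Euclidean norm. -/
noncomputable def dEmbed {S : Type*} [Fintype S] (d : S → ℝ) :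
    (S → ℝ) →ₗ[ℝ] EuclideanSpace ℝ S where
  toFun V := WithLp.toLp 2 (fun s => Real.sqrt (d s) * V s)
  map_add' V W := by ext s; simp [mul_add]
  map_smul' c V := by ext s; simp [mul_left_comm]

theorem norm_dEmbed {S : Type*} [Fintype S] {d : S → ℝ} (hd : ∀ s, 0 < d s) (V : S → ℝ) :
    ‖dEmbed d V‖ = dnorm d V := by
  rw [EuclideanSpace.norm_eq, dnorm]
  congr 1
  refine Finset.sum_congr rfl fun s _ => ?_
  simp [dEmbed, mul_pow, Real.sq_sqrt (hd s).le]

theorem abs_le_dnorm {S : Type*} [Fintype S] {d : S → ℝ} (hd : ∀ s, 0 < d s) (V : S → ℝ) (s : S) :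
    |V s| ≤ (Real.sqrt (d s))⁻¹ * dnorm d V := by
  have hs : 0 < Real.sqrt (d s) := Real.sqrt_pos.2 (hd s)
  have h := PiLp.norm_apply_le (dEmbed d V) s
  rw [norm_dEmbed hd] at h
  have h2 : ‖dEmbed d V s‖ = Real.sqrt (d s) * |V s| := by
    simp [dEmbed]
  rw [h2] at h
  rw [inv_mul_eq_div, le_div_iff₀ hs]
  linarith

/-- Each coordinate of the Bellman operator is an infimum over `u` of affine functions whose
coefficients `α (P s + u)` lie between `0` and `β Pe s`, so it varies by at most
`β Pe |V - W|`. -/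
theorem bellman_sub_le {S : Type*} [Fintype S]
    {r : S → ℝ} {P Pe : Matrix S S ℝ} {α β : ℝ} (hα : 0 < α)
    {U : S → Set (S → ℝ)} (hU : ∀ s, (U s).Nonempty) (hUc : ∀ s, IsCompact (U s))
    (hexp1 : ∀ s s', ∀ u ∈ U s, 0 ≤ P s s' + u s')
    (hexp2 : ∀ s s', ∀ u ∈ U s, α * (P s s' + u s') ≤ β * Pe s s')
    (V W : S → ℝ) (s : S) :
    bellman r P α U V s - bellman r P α U W s ≤ β * ∑ s', Pe s s' * |V s' - W s'| := by
  have hcomp : ∀ X : S → ℝ, IsCompact ((fun u : S → ℝ => ∑ s', u s' * X s') '' U s) := fun X =>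
    (hUc s).image (by fun_prop)
  -- By compactness the infimum at `W` is attained, say at `u`; test the infimum at `V` with `u`.
  obtain ⟨u, hu, huW⟩ := (hcomp W).sInf_mem ((hU s).image _)
  have hV : sigmaSet U V s ≤ ∑ s', u s' * V s' :=
    csInf_le (hcomp V).bddBelow ⟨u, hu, rfl⟩
  have hW : sigmaSet U W s = ∑ s', u s' * W s' := huW.symm
  have key : α * ∑ s', (P s s' + u s') * (V s' - W s') ≤ β * ∑ s', Pe s s' * |V s' - W s'| := by
    rw [Finset.mul_sum, Finset.mul_sum]
    refine Finset.sum_le_sum fun s' _ => ?_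
    calc α * ((P s s' + u s') * (V s' - W s'))
        = (α * (P s s' + u s')) * (V s' - W s') := by ring
      _ ≤ (α * (P s s' + u s')) * |V s' - W s'| :=
        mul_le_mul_of_nonneg_left (le_abs_self _) (mul_nonneg hα.le (hexp1 s s' u hu))
      _ ≤ (β * Pe s s') * |V s' - W s'| :=
        mul_le_mul_of_nonneg_right (hexp2 s s' u hu) (abs_nonneg _)
      _ = β * (Pe s s' * |V s' - W s'|) := by ring
  have hsplit : ∑ s', (P s s' + u s') * (V s' - W s')
      = (∑ s', P s s' * V s' + ∑ s', u s' * V s')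
        - (∑ s', P s s' * W s' + ∑ s', u s' * W s') := by
    rw [← Finset.sum_add_distrib, ← Finset.sum_add_distrib, ← Finset.sum_sub_distrib]
    exact Finset.sum_congr rfl fun s' _ => by ring
  rw [hsplit] at key
  have := mul_le_mul_of_nonneg_left hV hα.le
  simp only [bellman, Matrix.mulVec, dotProduct, hW]
  nlinarith

/-- The Bellman operator is a `β`-contraction for the norm weighted by the stationary
distribution of the exploration matrix. -/
theorem dnorm_bellman_sub_le {S : Type*} [Fintype S]
    {d : S → ℝ} (hd : ∀ s, 0 < d s)
    {r : S → ℝ} {P Pe : Matrix S S ℝ} {α β : ℝ} (hα : 0 < α) (hβ : 0 < β)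
    {U : S → Set (S → ℝ)} (hU : ∀ s, (U s).Nonempty) (hUc : ∀ s, IsCompact (U s))
    (hPe0 : ∀ s s', 0 ≤ Pe s s') (hPe1 : ∀ s, ∑ s', Pe s s' = 1)
    (hexp1 : ∀ s s', ∀ u ∈ U s, 0 ≤ P s s' + u s')
    (hexp2 : ∀ s s', ∀ u ∈ U s, α * (P s s' + u s') ≤ β * Pe s s')
    (hstat : ∀ s', ∑ s, d s * Pe s s' = d s')
    (V W : S → ℝ) :
    dnorm d (bellman r P α U V - bellman r P α U W) ≤ β * dnorm d (V - W) := by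
  have habs : ∀ s, |bellman r P α U V s - bellman r P α U W s|
      ≤ β * ∑ s', Pe s s' * |V s' - W s'| := fun s => by
    refine abs_sub_le_iff.2 ⟨bellman_sub_le hα hU hUc hexp1 hexp2 V W s, ?_⟩
    have := bellman_sub_le (r := r) hα hU hUc hexp1 hexp2 W V s
    simpa only [abs_sub_comm] using this
  rw [dnorm, dnorm]
  refine Real.sqrt_le_iff.2 ⟨by positivity, ?_⟩
  rw [mul_pow, Real.sq_sqrt (Finset.sum_nonneg fun s _ => mul_nonneg (hd s).le (sq_nonneg _))]
  calc ∑ s, d s * ((bellman r P α U V - bellman r P α U W) s) ^ 2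
      ≤ ∑ s, d s * (β ^ 2 * ∑ s', Pe s s' * (V s' - W s') ^ 2) := by
        refine Finset.sum_le_sum fun s _ => mul_le_mul_of_nonneg_left ?_ (hd s).le
        have jensen : (∑ s', Pe s s' * |V s' - W s'|) ^ 2
            ≤ ∑ s', Pe s s' * |V s' - W s'| ^ 2 :=
          Real.pow_arith_mean_le_arith_mean_pow _ _ _ (fun s' _ => hPe0 s s') (hPe1 s)
            (fun s' _ => abs_nonneg _) 2
        simp only [sq_abs] at jensen
        rw [Pi.sub_apply, ← sq_abs]
        calc _ ≤ (β * ∑ s', Pe s s' * |V s' - W s'|) ^ 2 :=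
              pow_le_pow_left₀ (abs_nonneg _) (habs s) 2
          _ = β ^ 2 * (∑ s', Pe s s' * |V s' - W s'|) ^ 2 := mul_pow _ _ _
          _ ≤ _ := mul_le_mul_of_nonneg_left jensen (sq_nonneg β)
    _ = β ^ 2 * ∑ s', (∑ s, d s * Pe s s') * (V s' - W s') ^ 2 := by
        simp only [Finset.sum_mul, Finset.mul_sum]
        rw [Finset.sum_comm]
        exact Finset.sum_congr rfl fun s' _ => Finset.sum_congr rfl fun s _ => by ring
    _ = β ^ 2 * ∑ s, d s * ((V - W) s) ^ 2 := by simp only [hstat, Pi.sub_apply]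

theorem dnorm_iterate_sub_le {S : Type*} [Fintype S] {d : S → ℝ} {β : ℝ} (hβ : 0 ≤ β)
    {T : (S → ℝ) → S → ℝ} (hT : ∀ V W, dnorm d (T V - T W) ≤ β * dnorm d (V - W))
    (V W : S → ℝ) (m : ℕ) :
    dnorm d (T^[m] V - T^[m] W) ≤ β ^ m * dnorm d (V - W) := by
  induction m with
  | zero => simp
  | succ m ih =>
    rw [Function.iterate_succ_apply', Function.iterate_succ_apply', pow_succ', mul_assoc]
    exact (hT _ _).trans (mul_le_mul_of_nonneg_left ih hβ)

theorem dnorm_iterate_le {S : Type*} [Fintype S] {d : S → ℝ} (hd : ∀ s, 0 < d s)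
    {β : ℝ} (hβ : 0 ≤ β) (hβ1 : β < 1)
    {T : (S → ℝ) → S → ℝ} (hT : ∀ V W, dnorm d (T V - T W) ≤ β * dnorm d (V - W))
    (V : S → ℝ) (m : ℕ) :
    dnorm d (T^[m] V) ≤ dnorm d V + dnorm d (T 0) / (1 - β) := by
  have hn : ∀ X, 0 ≤ dnorm d X := fun X => Real.sqrt_nonneg _
  have h1 : 0 < 1 - β := sub_pos.2 hβ1
  induction m with
  | zero => simpa using div_nonneg (hn _) h1.le
  | succ m ih =>
    rw [Function.iterate_succ_apply']
    have tri : dnorm d (T (T^[m] V)) ≤ dnorm d (T (T^[m] V) - T 0) + dnorm d (T 0) := by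
      simp only [← norm_dEmbed hd, map_sub]
      exact norm_le_norm_sub_add _ _
    have h2 := hT (T^[m] V) 0
    rw [sub_zero] at h2
    have h3 := mul_le_mul_of_nonneg_left ih hβ
    have h4 : β * (dnorm d V + dnorm d (T 0) / (1 - β)) + dnorm d (T 0)
        = β * dnorm d V + dnorm d (T 0) / (1 - β) := by
      field_simp
      ring
    have h5 := mul_le_mul_of_nonneg_right hβ1.le (hn V)
    linarith

theorem summable_iterate {S : Type*} [Fintype S] {d : S → ℝ} (hd : ∀ s, 0 < d s)
    {β : ℝ} (hβ : 0 ≤ β) (hβ1 : β < 1)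
    {T : (S → ℝ) → S → ℝ} (hT : ∀ V W, dnorm d (T V - T W) ≤ β * dnorm d (V - W))
    {lam : ℝ} (hlam : 0 ≤ lam) (hlam1 : lam < 1) (V : S → ℝ) :
    Summable fun m : ℕ => lam ^ m • T^[m + 1] V := by
  refine Pi.summable.2 fun s => ?_
  refine Summable.of_norm_bounded
    (g := fun m : ℕ => lam ^ m * ((Real.sqrt (d s))⁻¹ * (dnorm d V + dnorm d (T 0) / (1 - β))))
    ((summable_geometric_of_lt_one hlam hlam1).mul_right _) fun m => ?_
  rw [Pi.smul_apply, smul_eq_mul, norm_mul, Real.norm_of_nonneg (pow_nonneg hlam m)]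
  refine mul_le_mul_of_nonneg_left ((abs_le_dnorm hd _ s).trans ?_) (pow_nonneg hlam m)
  exact mul_le_mul_of_nonneg_left (dnorm_iterate_le hd hβ hβ1 hT V (m + 1))
    (inv_nonneg.2 (Real.sqrt_nonneg _))

theorem dnorm_tdOp_sub_le {S : Type*} [Fintype S] {d : S → ℝ} (hd : ∀ s, 0 < d s)
    {r : S → ℝ} {P : Matrix S S ℝ} {α : ℝ} {U : S → Set (S → ℝ)}
    {β : ℝ} (hβ : 0 ≤ β) (hβ1 : β < 1)
    (hT : ∀ V W, dnorm d (bellman r P α U V - bellman r P α U W) ≤ β * dnorm d (V - W))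
    {lam : ℝ} (hlam : 0 ≤ lam) (hlam1 : lam < 1) (V W : S → ℝ) :
    dnorm d (tdOp r P α lam U V - tdOp r P α lam U W)
      ≤ β * (1 - lam) / (1 - β * lam) * dnorm d (V - W) := by
  have sV := summable_iterate hd hβ hβ1 hT hlam hlam1 V
  have sW := summable_iterate hd hβ hβ1 hT hlam hlam1 W
  let E : (S → ℝ) →L[ℝ] EuclideanSpace ℝ S := (dEmbed d).toContinuousLinearMap
  have hE : ∀ X, ‖E X‖ = dnorm d X := norm_dEmbed hd
  have hgeo : HasSum (fun m : ℕ => (β * lam) ^ m * (β * dnorm d (V - W)))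
      ((1 - β * lam)⁻¹ * (β * dnorm d (V - W))) :=
    (hasSum_geometric_of_lt_one (mul_nonneg hβ hlam)
      (mul_lt_one_of_nonneg_of_lt_one_left hβ hβ1 hlam1.le)).mul_right _
  rw [tdOp, tdOp, ← smul_sub, ← sV.tsum_sub sW, ← hE, map_smul, norm_smul,
    Real.norm_of_nonneg (sub_nonneg.2 hlam1.le), E.map_tsum (sV.sub sW)]
  have hbound := tsum_of_norm_bounded hgeo
    (f := fun m : ℕ => E (lam ^ m • (bellman r P α U)^[m + 1] V
      - lam ^ m • (bellman r P α U)^[m + 1] W)) fun m => by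
    rw [← smul_sub, map_smul, norm_smul, hE, Real.norm_of_nonneg (pow_nonneg hlam m)]
    calc _ ≤ lam ^ m * (β ^ (m + 1) * dnorm d (V - W)) :=
          mul_le_mul_of_nonneg_left (dnorm_iterate_sub_le hβ hT V W (m + 1)) (pow_nonneg hlam m)
      _ = _ := by ring
  calc _ ≤ (1 - lam) * ((1 - β * lam)⁻¹ * (β * dnorm d (V - W))) :=
        mul_le_mul_of_nonneg_left hbound (sub_nonneg.2 hlam1.le)
    _ = _ := by ring

/-- Writing `y = Φ w` for the projection of `x`, the normal equation `ΦᵀDΦ w = ΦᵀD x` gives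
`⟨y, y⟩_d = ⟨y, x⟩_d`, whence `‖y‖_d ≤ ‖x‖_d`. -/
theorem dnorm_projMat_le {S : Type*} [Fintype S] [DecidableEq S] {L : ℕ}
    {d : S → ℝ} (hd : ∀ s, 0 < d s) {Φ : Matrix S (Fin L) ℝ}
    (hunit : IsUnit (Φᵀ * Matrix.diagonal d * Φ)) (x : S → ℝ) :
    dnorm d ((projMat Φ d).mulVec x) ≤ dnorm d x := by
  set G := Φᵀ * Matrix.diagonal d * Φ with hG
  set y := (projMat Φ d).mulVec x with hy
  set w := G⁻¹.mulVec ((Φᵀ * Matrix.diagonal d).mulVec x) with hw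
  have hyw : y = Φ.mulVec w := by
    simp only [hy, hw, projMat, Matrix.mulVec_mulVec, Matrix.mul_assoc, hG]
  have hnormal : (Φᵀ * Matrix.diagonal d).mulVec y = (Φᵀ * Matrix.diagonal d).mulVec x := by
    rw [hyw, Matrix.mulVec_mulVec, ← hG, hw, Matrix.mulVec_mulVec,
      Matrix.mul_nonsing_inv _ ((Matrix.isUnit_iff_isUnit_det _).1 hunit), Matrix.one_mulVec]
  have hinner : ∀ z : S → ℝ,
      w ⬝ᵥ (Φᵀ * Matrix.diagonal d).mulVec z = ∑ s, d s * (y s * z s) := fun z => by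
    rw [← Matrix.mulVec_mulVec, Matrix.dotProduct_mulVec, Matrix.vecMul_transpose, ← hyw]
    simp only [dotProduct, Matrix.mulVec_diagonal]
    exact Finset.sum_congr rfl fun s _ => by ring
  have horth : ∑ s, d s * (y s * y s) = ∑ s, d s * (y s * x s) := by
    rw [← hinner, ← hinner, hnormal]
  refine Real.sqrt_le_sqrt ?_
  have hsq : 0 ≤ ∑ s, d s * (y s - x s) ^ 2 :=
    Finset.sum_nonneg fun s _ => mul_nonneg (hd s).le (sq_nonneg _)
  have hexpand : ∑ s, d s * (y s - x s) ^ 2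
      = ∑ s, d s * (y s * y s) - 2 * ∑ s, d s * (y s * x s) + ∑ s, d s * x s ^ 2 := by
    rw [Finset.mul_sum, ← Finset.sum_sub_distrib, ← Finset.sum_add_distrib]
    exact Finset.sum_congr rfl fun s _ => by ring
  have hyy : ∑ s, d s * y s ^ 2 = ∑ s, d s * (y s * y s) :=
    Finset.sum_congr rfl fun s _ => by ring
  linarith

theorem projected_tdOp_contraction
    {S : Type*} [Fintype S] [DecidableEq S] [Nonempty S] {L : ℕ}
    (d : S → ℝ) (hd : ∀ s, 0 < d s)
    (r : S → ℝ) (P : Matrix S S ℝ)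
    (hP0 : ∀ s s', 0 ≤ P s s') (hP1 : ∀ s, ∑ s', P s s' = 1)
    (α : ℝ) (hα : α ∈ Set.Ioo (0 : ℝ) 1)
    (U : S → Set (S → ℝ)) (hU : ∀ s, (U s).Nonempty) (hUc : ∀ s, IsCompact (U s))
    (Pe : Matrix S S ℝ) (hPe0 : ∀ s s', 0 ≤ Pe s s') (hPe1 : ∀ s, ∑ s', Pe s s' = 1)
    (β : ℝ) (hβ : β ∈ Set.Ioo (0 : ℝ) 1)
    (hexp1 : ∀ s s', ∀ u ∈ U s, 0 ≤ P s s' + u s')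
    (hexp2 : ∀ s s', ∀ u ∈ U s, α * (P s s' + u s') ≤ β * Pe s s')
    (hexp3 : ∀ s s', α * P s s' ≤ β * Pe s s')
    (hstat1 : ∑ s, d s = 1) (hstat2 : ∀ s', ∑ s, d s * Pe s s' = d s')
    (Φ : Matrix S (Fin L) ℝ) (hrank : Φ.rank = L)
    (hunit : IsUnit (Φᵀ * Matrix.diagonal d * Φ))
    (lam : ℝ) (hlam : lam ∈ Set.Ico (0 : ℝ) 1)
    (V1 V2 : S → ℝ) :
    dnorm d ((projMat Φ d).mulVec (tdOp r P α lam U V1)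
        - (projMat Φ d).mulVec (tdOp r P α lam U V2))
      ≤ β * (1 - lam) / (1 - β * lam) * dnorm d (V1 - V2) := by
  rw [← Matrix.mulVec_sub]
  exact (dnorm_projMat_le hd hunit _).trans
    (dnorm_tdOp_sub_le hd hβ.1.le hβ.2
      (dnorm_bellman_sub_le hd hα.1 hβ.1 hU hUc hPe0 hPe1 hexp1 hexp2 hstat2)
      hlam.1 hlam.2 V1 V2)
end

section
/- If V ∈ ℝ^S satisfies T(V) = V, then for every λ ∈ [0,1) the exact multi-step operator T̄^{(λ)} (the approximate robust TD(λ) operator built from the true uncertainty sets U_s) satisfies T̄^{(λ)}(V) = V. -/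
/-!
Writing `A = α P` and `w = r + α σ_U(V)`, the fixed-point equation reads `w + A V = V`. Iterating it
gives `∑_{t ≤ m} A^t w + A^{m+1} V = V` for every `m` (`sum_pow_mulVec_add`), so each bracket in the
multi-step operator equals `V`, and the geometric weights `(1 - λ) λ^m` sum to one.
-/

open Matrix Finset

/-- The multi-step operator built from the uncertainty sets `U`:
T̄^{(λ)}(V) = (1−λ) Σ_m λ^m [Σ_{t≤m} (αP)^t r + α Σ_{t≤m} (αP)^t σ_U(V) + (αP)^{m+1} V]. -/
noncomputable def multiStepOp {S : Type*} [Fintype S] [DecidableEq S] (r : S → ℝ)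
    (P : Matrix S S ℝ) (α lam : ℝ) (U : S → Set (S → ℝ)) (V : S → ℝ) : S → ℝ :=
  (1 - lam) • ∑' m : ℕ, lam ^ m •
    ((∑ t ∈ Finset.range (m + 1), ((α • P) ^ t).mulVec r)
      + α • (∑ t ∈ Finset.range (m + 1), ((α • P) ^ t).mulVec (sigmaSet U V))
      + ((α • P) ^ (m + 1)).mulVec V)

/-- Unrolling the affine fixed-point equation `w + A V = V` any number of times leaves `V`
unchanged. -/
theorem sum_pow_mulVec_add {S : Type*} [Fintype S] [DecidableEq S] (A : Matrix S S ℝ)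
    (w V : S → ℝ) (h : w + A.mulVec V = V) (n : ℕ) :
    ∑ t ∈ Finset.range n, (A ^ t).mulVec w + (A ^ n).mulVec V = V := by
  induction n with
  | zero => simp
  | succ n ih =>
    rw [Finset.sum_range_succ, add_assoc, pow_succ, ← Matrix.mulVec_mulVec, ← Matrix.mulVec_add,
      h, ih]

theorem multiStepOp_fixed_point {S : Type*} [Fintype S] [DecidableEq S] [Nonempty S]
    (r : S → ℝ) (P : Matrix S S ℝ)
    (hP0 : ∀ s s', 0 ≤ P s s') (hP1 : ∀ s, ∑ s', P s s' = 1)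
    (α : ℝ) (hα : α ∈ Set.Ioo (0 : ℝ) 1)
    (U : S → Set (S → ℝ)) (hU : ∀ s, (U s).Nonempty) (hUc : ∀ s, IsCompact (U s))
    (V : S → ℝ) (hV : bellman r P α U V = V) :
    ∀ lam ∈ Set.Ico (0 : ℝ) 1, multiStepOp r P α lam U V = V := by
  rintro lam ⟨h0, h1⟩
  have hw : (r + α • sigmaSet U V) + (α • P).mulVec V = V := by
    conv_rhs => rw [← hV]
    ext s
    simp only [bellman, Matrix.smul_mulVec, Pi.add_apply, Pi.smul_apply, smul_eq_mul]
    ring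
  have hm (m : ℕ) : (∑ t ∈ Finset.range (m + 1), ((α • P) ^ t).mulVec r)
      + α • (∑ t ∈ Finset.range (m + 1), ((α • P) ^ t).mulVec (sigmaSet U V))
      + ((α • P) ^ (m + 1)).mulVec V = V := by
    have h := sum_pow_mulVec_add _ _ _ hw (m + 1)
    simpa only [Matrix.mulVec_add, Matrix.mulVec_smul, Finset.sum_add_distrib,
      ← Finset.smul_sum] using h
  have hs : HasSum (fun m : ℕ => lam ^ m • V) ((1 - lam)⁻¹ • V) :=
    (hasSum_geometric_of_lt_one h0 h1).smul_const V
  simp only [multiStepOp, hm]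
  rw [hs.tsum_eq, smul_inv_smul₀ (sub_pos.mpr h1).ne']
end

section
/- Let U, Û ⊆ ℝ^S be nonempty compact sets, and set ρ := (1/d_min)·max{ sup_{x∈Û, y∈U∖Û} ‖x−y‖_d , sup_{x∈U, y∈Û∖U} ‖x−y‖_d }, where d_min := min_{s∈S} d(s) and a supremum over an empty set is taken to be 0. Then for every V ∈ ℝ^S: |inf_{u∈Û} Σ_{s'} u(s')V(s') − inf_{u∈U} Σ_{s'} u(s')V(s')| ≤ ρ‖V‖_d. -/
/-!
Each infimum is attained by compactness. To bound `inf_A f - inf_B f`, let `y` minimise `f` over `B`.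
If `y ∈ A` the difference is at most `0`; otherwise `y ∈ B \ A`, and for any `x ∈ A` the difference
is at most `f x - f y = ∑ (x - y) V`. Weighted Cauchy–Schwarz (`mul_sum_le_dnorm_mul_dnorm`) bounds
this by `(1 / dmin) ‖x - y‖_d ‖V‖_d`, and `‖x - y‖_d` is at most the supremum over `A × (B \ A)`,
which is finite by compactness. Applying this with the two sets in either order gives the claim.
-/

open Matrix Finset

theorem continuous_dnorm {S : Type*} [Fintype S] (d : S → ℝ) : Continuous (dnorm d) := by
  unfold dnorm
  fun_prop

/-- Weighted Cauchy–Schwarz, with a lower bound `m` of the weights pulled out. -/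
theorem mul_sum_le_dnorm_mul_dnorm {S : Type*} [Fintype S] (d : S → ℝ) (m : ℝ) (hm : 0 < m)
    (hmd : ∀ s, m ≤ d s) (x V : S → ℝ) :
    m * ∑ s, x s * V s ≤ dnorm d x * dnorm d V := by
  have hd : ∀ s, 0 ≤ d s := fun s => hm.le.trans (hmd s)
  have hsq : ∀ W : S → ℝ, dnorm d W = √(∑ s, (√(d s) * |W s|) ^ 2) := fun W => by
    simp only [dnorm, mul_pow, sq_abs, Real.sq_sqrt (hd _)]
  rw [hsq x, hsq V]
  refine le_trans ?_ (Real.sum_mul_le_sqrt_mul_sqrt _ _ _)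
  rw [Finset.mul_sum]
  refine Finset.sum_le_sum fun s _ => ?_
  calc m * (x s * V s) ≤ m * |x s * V s| := by gcongr; exact le_abs_self _
    _ ≤ d s * |x s * V s| := by gcongr; exact hmd s
    _ = (√(d s) * √(d s)) * (|x s| * |V s|) := by rw [Real.mul_self_sqrt (hd s), abs_mul]
    _ = √(d s) * |x s| * (√(d s) * |V s|) := by ring

/-- The one-sided estimate, stated for a bound `M` that may exceed the supremum over
`A ×ˢ (B \ A)`; the `max` in the definition of `ρ` is such a bound for both orders of the sets. -/
theorem sInf_sub_sInf_le {S : Type*} [Fintype S] (d : S → ℝ) (m : ℝ) (hm : 0 < m)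
    (hmd : ∀ s, m ≤ d s) (A B : Set (S → ℝ)) (hA : A.Nonempty) (hAc : IsCompact A)
    (hB : B.Nonempty) (hBc : IsCompact B) (M : ℝ)
    (hM : sSup ((fun p : (S → ℝ) × (S → ℝ) => dnorm d (p.1 - p.2)) '' (A ×ˢ (B \ A))) ≤ M)
    (V : S → ℝ) :
    sInf ((fun u => ∑ s', u s' * V s') '' A) - sInf ((fun u => ∑ s', u s' * V s') '' B)
      ≤ (1 / m) * M * dnorm d V := by
  have hf : Continuous (fun u : S → ℝ => ∑ s', u s' * V s') := by fun_prop
  have hbdd := (hAc.image hf).bddBelow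
  have hM0 : 0 ≤ M := by
    refine le_trans (Real.sSup_nonneg ?_) hM
    rintro _ ⟨p, -, rfl⟩
    exact Real.sqrt_nonneg _
  have hV0 : 0 ≤ dnorm d V := Real.sqrt_nonneg _
  obtain ⟨y, hy, hy_eq⟩ := (hBc.image hf).sInf_mem (hB.image _)
  rw [← hy_eq]
  by_cases hyA : y ∈ A
  · have h1 := csInf_le hbdd ⟨y, hyA, rfl⟩
    have h2 : 0 ≤ (1 / m) * M * dnorm d V := by positivity
    linarith
  · obtain ⟨x, hx⟩ := hA
    have h1 := csInf_le hbdd ⟨x, hx, rfl⟩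
    have hg : Continuous (fun p : (S → ℝ) × (S → ℝ) => dnorm d (p.1 - p.2)) :=
      (continuous_dnorm d).comp (by fun_prop)
    have hgb := ((hAc.prod hBc).image hg).bddAbove.mono
      (Set.image_mono (Set.prod_mono_right (s := A) (Set.sdiff_subset (s := B) (t := A))))
    have h2 : dnorm d (x - y) ≤ M :=
      (le_csSup hgb ⟨(x, y), ⟨hx, hy, hyA⟩, rfl⟩).trans hM
    have h3 := mul_sum_le_dnorm_mul_dnorm d m hm hmd (x - y) V
    have h4 := mul_le_mul_of_nonneg_right h2 hV0
    have h5 : ∑ s, (x - y) s * V s = ∑ s, x s * V s - ∑ s, y s * V s := by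
      simp only [Pi.sub_apply, sub_mul, Finset.sum_sub_distrib]
    have h6 : ∑ s, x s * V s - ∑ s, y s * V s ≤ (1 / m) * M * dnorm d V := by
      rw [← h5, mul_assoc, one_div, le_inv_mul_iff₀ hm]
      exact h3.trans h4
    simp only at h1 ⊢
    linarith

theorem sigma_diff_le_rho {S : Type*} [Fintype S] [Nonempty S]
    (d : S → ℝ) (hd : ∀ s, 0 < d s)
    (U Uh : Set (S → ℝ))
    (hU : U.Nonempty) (hUc : IsCompact U)
    (hUh : Uh.Nonempty) (hUhc : IsCompact Uh)
    (dmin : ℝ) (hdmin : dmin = Finset.univ.inf' Finset.univ_nonempty d)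
    (ρ : ℝ)
    (hρ : ρ = (1 / dmin) * max
      (sSup ((fun p : (S → ℝ) × (S → ℝ) => dnorm d (p.1 - p.2)) '' (Uh ×ˢ (U \ Uh))))
      (sSup ((fun p : (S → ℝ) × (S → ℝ) => dnorm d (p.1 - p.2)) '' (U ×ˢ (Uh \ U)))))
    (V : S → ℝ) :
    |sInf ((fun u => ∑ s', u s' * V s') '' Uh)
        - sInf ((fun u => ∑ s', u s' * V s') '' U)|
      ≤ ρ * dnorm d V := by
  have hm : 0 < dmin := by
    rw [hdmin, Finset.lt_inf'_iff]
    exact fun s _ => hd s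
  have hmd : ∀ s, dmin ≤ d s := fun s => hdmin ▸ Finset.inf'_le d (Finset.mem_univ s)
  rw [hρ, abs_sub_le_iff]
  exact ⟨sInf_sub_sInf_le d dmin hm hmd Uh U hUh hUhc hU hUc _ (le_max_left _ _) V,
    sInf_sub_sInf_le d dmin hm hmd U Uh hU hUc hUh hUhc _ (le_max_right _ _) V⟩
end

section
/- Let P, P_e ∈ ℝ^{S×S} be row-stochastic matrices, α ∈ (0,1), β ∈ (0,1), and suppose αP(s,s') ≤ βP_e(s,s') for all s,s' ∈ S, and d is a stationary distribution of P_e with d(s) > 0 for all s. Then for every t ∈ ℕ and every V ∈ ℝ^S: ‖(αP)^t V‖_d ≤ β^t ‖V‖_d. -/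
/-!
Summing `α P ≤ β Pe` over a row gives `α ≤ β`. Cauchy–Schwarz for the probability vector `P s ·`
(Jensen for the square) then gives, at every state,
`((α P V) s)² ≤ α ∑ s', α P s s' V(s')² ≤ β² ∑ s', Pe s s' V(s')²`,
and averaging against `d`, which is stationary for `Pe`, turns the right-hand side into
`β² ‖V‖_d²`. So `α P` has operator norm at most `β` for `‖·‖_d`, and powers follow by induction.
-/

open Matrix Finset

theorem sq_smul_mulVec_le {S : Type*} [Fintype S] {P Pe : Matrix S S ℝ}
    (hP0 : ∀ s s', 0 ≤ P s s') (hP1 : ∀ s, ∑ s', P s s' = 1)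
    (hPe1 : ∀ s, ∑ s', Pe s s' = 1) {α β : ℝ} (hα : 0 ≤ α)
    (hexp : ∀ s s', α * P s s' ≤ β * Pe s s') (V : S → ℝ) (s : S) :
    ((α • P).mulVec V s) ^ 2 ≤ β ^ 2 * ∑ s', Pe s s' * V s' ^ 2 := by
  have hαβ : α ≤ β := by
    have h := Finset.sum_le_sum fun s' (_ : s' ∈ Finset.univ) => hexp s s'
    rwa [← Finset.mul_sum, ← Finset.mul_sum, hP1, hPe1, mul_one, mul_one] at h
  have jensen : (∑ s', P s s' * V s') ^ 2 ≤ ∑ s', P s s' * V s' ^ 2 := by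
    have h := Finset.sum_sq_le_sum_mul_sum_of_sq_le_mul Finset.univ
      (r := fun s' => P s s' * V s') (f := fun s' => P s s')
      (g := fun s' => P s s' * V s' ^ 2) (fun s' _ => hP0 s s')
      (fun s' _ => mul_nonneg (hP0 s s') (sq_nonneg _)) (fun s' _ => le_of_eq (by ring))
    rwa [hP1, one_mul] at h
  have hle : α * ∑ s', P s s' * V s' ^ 2 ≤ β * ∑ s', Pe s s' * V s' ^ 2 := by
    rw [Finset.mul_sum, Finset.mul_sum]
    refine Finset.sum_le_sum fun s' _ => ?_
    rw [← mul_assoc, ← mul_assoc]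
    exact mul_le_mul_of_nonneg_right (hexp s s') (sq_nonneg _)
  have hnn : 0 ≤ ∑ s', P s s' * V s' ^ 2 :=
    Finset.sum_nonneg fun s' _ => mul_nonneg (hP0 s s') (sq_nonneg _)
  calc ((α • P).mulVec V s) ^ 2 = α ^ 2 * (∑ s', P s s' * V s') ^ 2 := by
        rw [Matrix.smul_mulVec, Pi.smul_apply, smul_eq_mul, mul_pow]; rfl
    _ ≤ α ^ 2 * ∑ s', P s s' * V s' ^ 2 := mul_le_mul_of_nonneg_left jensen (sq_nonneg _)
    _ = α * (α * ∑ s', P s s' * V s' ^ 2) := by ring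
    _ ≤ β * (α * ∑ s', P s s' * V s' ^ 2) :=
        mul_le_mul_of_nonneg_right hαβ (mul_nonneg hα hnn)
    _ ≤ β * (β * ∑ s', Pe s s' * V s' ^ 2) :=
        mul_le_mul_of_nonneg_left hle (hα.trans hαβ)
    _ = β ^ 2 * ∑ s', Pe s s' * V s' ^ 2 := by ring

theorem sum_mul_sum_of_stationary {S : Type*} [Fintype S] {Pe : Matrix S S ℝ} {d : S → ℝ}
    (hstat : ∀ s', ∑ s, d s * Pe s s' = d s') (f : S → ℝ) :
    ∑ s, d s * ∑ s', Pe s s' * f s' = ∑ s, d s * f s := by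
  simp_rw [Finset.mul_sum, ← mul_assoc]
  rw [Finset.sum_comm]
  simp_rw [← Finset.sum_mul, hstat]

theorem dnorm_smul_mulVec_le {S : Type*} [Fintype S] {P Pe : Matrix S S ℝ}
    (hP0 : ∀ s s', 0 ≤ P s s') (hP1 : ∀ s, ∑ s', P s s' = 1)
    (hPe1 : ∀ s, ∑ s', Pe s s' = 1) {α β : ℝ} (hα : 0 ≤ α) (hβ : 0 ≤ β)
    (hexp : ∀ s s', α * P s s' ≤ β * Pe s s')
    {d : S → ℝ} (hd : ∀ s, 0 ≤ d s) (hstat : ∀ s', ∑ s, d s * Pe s s' = d s') (V : S → ℝ) :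
    dnorm d ((α • P).mulVec V) ≤ β * dnorm d V := by
  unfold dnorm
  rw [← Real.sqrt_sq hβ, ← Real.sqrt_mul (sq_nonneg _)]
  apply Real.sqrt_le_sqrt
  calc ∑ s, d s * ((α • P).mulVec V s) ^ 2
      ≤ ∑ s, d s * (β ^ 2 * ∑ s', Pe s s' * V s' ^ 2) :=
        Finset.sum_le_sum fun s _ => mul_le_mul_of_nonneg_left
          (sq_smul_mulVec_le hP0 hP1 hPe1 hα hexp V s) (hd s)
    _ = β ^ 2 * ∑ s, d s * ∑ s', Pe s s' * V s' ^ 2 := by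
        rw [Finset.mul_sum]
        exact Finset.sum_congr rfl fun s _ => by ring
    _ = β ^ 2 * ∑ s, d s * V s ^ 2 := by
        rw [sum_mul_sum_of_stationary hstat fun s => V s ^ 2]

theorem dnorm_pow_mulVec_le {S : Type*} [Fintype S] [DecidableEq S] [Nonempty S]
    (P Pe : Matrix S S ℝ)
    (hP0 : ∀ s s', 0 ≤ P s s') (hP1 : ∀ s, ∑ s', P s s' = 1)
    (hPe0 : ∀ s s', 0 ≤ Pe s s') (hPe1 : ∀ s, ∑ s', Pe s s' = 1)
    (α : ℝ) (hα : α ∈ Set.Ioo (0 : ℝ) 1)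
    (β : ℝ) (hβ : β ∈ Set.Ioo (0 : ℝ) 1)
    (hexp : ∀ s s', α * P s s' ≤ β * Pe s s')
    (d : S → ℝ) (hd : ∀ s, 0 < d s)
    (hstat1 : ∑ s, d s = 1) (hstat2 : ∀ s', ∑ s, d s * Pe s s' = d s')
    (t : ℕ) (V : S → ℝ) :
    dnorm d (((α • P) ^ t).mulVec V) ≤ β ^ t * dnorm d V := by
  induction t with
  | zero => simp
  | succ t ih =>
    rw [pow_succ', ← Matrix.mulVec_mulVec, pow_succ', mul_assoc]
    exact (dnorm_smul_mulVec_le hP0 hP1 hPe1 hα.1.le hβ.1.le hexp (fun s => (hd s).le) hstat2 _).trans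
      (mul_le_mul_of_nonneg_left ih hβ.1.le)
end

section
/- Let P_e ∈ ℝ^{S×S} be row-stochastic, β ∈ (0,1), λ ∈ [0,1), and c := β(2−λ)/(1−βλ). Then the matrix H̄ := (1/c)(1−λ)Σ_{m=0}^∞ λ^m [βΣ_{t=0}^m (βP_e)^t + (βP_e)^{m+1}] is well defined (the series converges), has nonnegative entries, and every row sums to 1, i.e., H̄·𝟙 = 𝟙 where 𝟙 is the all-ones vector. -/
/-!
Powers of a row-stochastic matrix are row-stochastic, so the `m`-th term of the series has
nonnegative entries and constant row sums
`r m = λ ^ m * (β * ∑ t ≤ m, β ^ t + β ^ (m + 1))`.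
These scalars form a combination of geometric series with sum `β (2 - λ) / ((1 - β λ) (1 - λ))`,
which is `c / (1 - λ)`. Each entry of a term lies between `0` and `r m`, so the matrix series
converges entrywise by comparison with `∑ r m`; summing a row and exchanging the finite sum with the series
gives row sum `1` after normalization.
-/

open Matrix Finset

/-- The matrix H̄ = (1/c)(1−λ) Σ_m λ^m [β Σ_{t≤m} (βP)^t + (βP)^{m+1}]. -/
noncomputable def Hbar {S : Type*} [Fintype S] [DecidableEq S] (P : Matrix S S ℝ)
    (β lam c : ℝ) : Matrix S S ℝ :=
  (1 / c) • ((1 - lam) • ∑' m : ℕ, lam ^ m •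
    (β • ∑ t ∈ Finset.range (m + 1), (β • P) ^ t + (β • P) ^ (m + 1)))

namespace HbarAux

variable {S : Type*} [Fintype S] [DecidableEq S]

/-- The `m`-th term of the matrix series defining `Hbar`. -/
noncomputable def term (P : Matrix S S ℝ) (β lam : ℝ) (m : ℕ) : Matrix S S ℝ :=
  lam ^ m • (β • ∑ t ∈ Finset.range (m + 1), (β • P) ^ t + (β • P) ^ (m + 1))

/-- The common row sum of `term P β lam m` when `P` is row-stochastic. -/
noncomputable def rowVal (β lam : ℝ) (m : ℕ) : ℝ :=
  lam ^ m * (β * ∑ t ∈ Finset.range (m + 1), β ^ t + β ^ (m + 1))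

lemma term_apply (P : Matrix S S ℝ) (β lam : ℝ) (m : ℕ) (s s' : S) :
    term P β lam m s s' = lam ^ m * (β * ∑ t ∈ Finset.range (m + 1), β ^ t * (P ^ t) s s'
      + β ^ (m + 1) * (P ^ (m + 1)) s s') := by
  simp [term, smul_pow, Matrix.sum_apply]

lemma term_nonneg {P : Matrix S S ℝ} (hP : P ∈ rowStochastic ℝ S) {β lam : ℝ} (hβ : 0 ≤ β)
    (hlam : 0 ≤ lam) (m : ℕ) (s s' : S) : 0 ≤ term P β lam m s s' := by
  have h : ∀ t, 0 ≤ (P ^ t) s s' := fun t => (mem_rowStochastic.1 (pow_mem hP t)).1 s s'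
  rw [term_apply]
  have h1 : 0 ≤ ∑ t ∈ Finset.range (m + 1), β ^ t * (P ^ t) s s' :=
    Finset.sum_nonneg fun t _ => mul_nonneg (pow_nonneg hβ t) (h t)
  have h2 := h (m + 1)
  positivity

lemma term_row_sum {P : Matrix S S ℝ} (hP : P ∈ rowStochastic ℝ S) (β lam : ℝ) (m : ℕ) (s : S) :
    ∑ s', term P β lam m s s' = rowVal β lam m := by
  have h : ∀ t, ∑ s', (P ^ t) s s' = 1 := fun t =>
    (mem_rowStochastic_iff_sum.1 (pow_mem hP t)).2 s
  simp only [term_apply, rowVal, ← Finset.mul_sum, Finset.sum_add_distrib]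
  rw [Finset.sum_comm]
  simp only [← Finset.mul_sum, h, mul_one]

/-- Closing the inner geometric sum writes `rowVal β lam m` as a combination of `lam ^ m` and
`(β * lam) ^ m`, whose series are known; the value is `c / (1 - lam)`. -/
lemma hasSum_rowVal {β lam : ℝ} (hβ : β ∈ Set.Ioo (0 : ℝ) 1) (hlam : lam ∈ Set.Ico (0 : ℝ) 1) :
    HasSum (rowVal β lam) (β * (2 - lam) / (1 - β * lam) / (1 - lam)) := by
  obtain ⟨hβ0, hβ1⟩ := hβ
  obtain ⟨hl0, hl1⟩ := hlam
  have hbl : β * lam < 1 := by nlinarith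
  have n1 : 1 - β ≠ 0 := by linarith
  have n2 : 1 - lam ≠ 0 := by linarith
  have n3 : 1 - β * lam ≠ 0 := by linarith
  have g1 := (hasSum_geometric_of_lt_one hl0 hl1).mul_left (β / (1 - β))
  have g2 := (hasSum_geometric_of_lt_one (mul_nonneg hβ0.le hl0) hbl).mul_left
    (β - β ^ 2 / (1 - β))
  have hf : rowVal β lam = fun m => β / (1 - β) * lam ^ m
      + (β - β ^ 2 / (1 - β)) * (β * lam) ^ m := by
    funext m
    have hg : ∑ t ∈ Finset.range (m + 1), β ^ t = (1 - β ^ (m + 1)) / (1 - β) := by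
      rw [eq_div_iff n1, geom_sum_mul_neg]
    rw [rowVal, hg, mul_pow]
    field_simp
    ring
  have hv : β * (2 - lam) / (1 - β * lam) / (1 - lam)
      = β / (1 - β) * (1 - lam)⁻¹ + (β - β ^ 2 / (1 - β)) * (1 - β * lam)⁻¹ := by
    field_simp
    ring
  rw [hf, hv]
  exact g1.add g2

lemma summable_entry {P : Matrix S S ℝ} (hP : P ∈ rowStochastic ℝ S) {β lam : ℝ}
    (hβ : β ∈ Set.Ioo (0 : ℝ) 1) (hlam : lam ∈ Set.Ico (0 : ℝ) 1) (s s' : S) :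
    Summable fun m => term P β lam m s s' := by
  have hn := term_nonneg hP hβ.1.le hlam.1
  refine Summable.of_nonneg_of_le (fun m => hn m s s') (fun m => ?_)
    (hasSum_rowVal hβ hlam).summable
  rw [← term_row_sum hP β lam m s]
  exact Finset.single_le_sum (fun j _ => hn m s j) (Finset.mem_univ s')

lemma summable_term {P : Matrix S S ℝ} (hP : P ∈ rowStochastic ℝ S) {β lam : ℝ}
    (hβ : β ∈ Set.Ioo (0 : ℝ) 1) (hlam : lam ∈ Set.Ico (0 : ℝ) 1) :
    Summable (term P β lam) :=
  Pi.summable.2 fun s => Pi.summable.2 fun s' => summable_entry hP hβ hlam s s'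

lemma Hbar_apply {P : Matrix S S ℝ} (hP : P ∈ rowStochastic ℝ S) {β lam : ℝ}
    (hβ : β ∈ Set.Ioo (0 : ℝ) 1) (hlam : lam ∈ Set.Ico (0 : ℝ) 1) (c : ℝ) (s s' : S) :
    Hbar P β lam c s s' = 1 / c * ((1 - lam) * ∑' m, term P β lam m s s') := by
  have h := Pi.hasSum.1 (Pi.hasSum.1 (summable_term hP hβ hlam).hasSum s) s'
  rw [h.tsum_eq]
  rfl

end HbarAux

open HbarAux in
theorem Hbar_row_stochastic {S : Type*} [Fintype S] [DecidableEq S] [Nonempty S]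
    (Pe : Matrix S S ℝ) (hPe0 : ∀ s s', 0 ≤ Pe s s') (hPe1 : ∀ s, ∑ s', Pe s s' = 1)
    (β : ℝ) (hβ : β ∈ Set.Ioo (0 : ℝ) 1)
    (lam : ℝ) (hlam : lam ∈ Set.Ico (0 : ℝ) 1)
    (c : ℝ) (hc : c = β * (2 - lam) / (1 - β * lam)) :
    Summable (fun m : ℕ => lam ^ m •
        (β • ∑ t ∈ Finset.range (m + 1), (β • Pe) ^ t + (β • Pe) ^ (m + 1))) ∧
      (∀ s s', 0 ≤ Hbar Pe β lam c s s') ∧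
      ∀ s, ∑ s', Hbar Pe β lam c s s' = 1 := by
  have hP : Pe ∈ rowStochastic ℝ S := mem_rowStochastic_iff_sum.2 ⟨hPe0, hPe1⟩
  have hl : 0 < 1 - lam := by linarith [hlam.2]
  have hcpos : 0 < c := by
    have h1 : 0 < 1 - β * lam := by nlinarith [hβ.1, hβ.2, hlam.1, hlam.2]
    have h2 : 0 < 2 - lam := by linarith
    have h3 := hβ.1
    rw [hc]
    positivity
  refine ⟨summable_term hP hβ hlam, fun s s' => ?_, fun s => ?_⟩
  · rw [Hbar_apply hP hβ hlam]
    have : 0 ≤ ∑' m, term Pe β lam m s s' := tsum_nonneg fun m => term_nonneg hP hβ.1.le hlam.1 m s s'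
    positivity
  · simp only [Hbar_apply hP hβ hlam, ← Finset.mul_sum]
    rw [← Summable.tsum_finsetSum fun s' _ => summable_entry hP hβ hlam s s']
    simp only [term_row_sum hP]
    rw [(hasSum_rowVal hβ hlam).tsum_eq, ← hc]
    field_simp
end
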